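/- arXiv:2405.03428 — 4 statements merged into one kernel-verified Lean document; each statement's English description precedes it below -/
import Mathlib

section
/- Assume the Continuum Hypothesis, i.e. 2^ℵ₀ = ℵ₁. Then the fast club poset has the ℵ₂-chain condition: every antichain (set of pairwise incompatible conditions, where two conditions are compatible iff some condition extends both) in the fast club poset has cardinality at most ℵ₁. -/
/-- The first uncountable ordinal. -/
noncomputable def omega1 : Ordinal.{0} := (Cardinal.aleph 1).ord

/-- `S` is closed in `lam`: it contains all of its limit points below `lam`. -/
def IsClosedIn (S : Set Ordinal.{0}) (lam : Ordinal.{0}) : Prop :=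
  ∀ α, α < lam → 0 < α → (∀ β < α, ∃ γ ∈ S, β < γ ∧ γ < α) → α ∈ S

/-- `S` is a club in `lam`: a closed unbounded subset of `lam`. -/
def IsClubIn (S : Set Ordinal.{0}) (lam : Ordinal.{0}) : Prop :=
  S ⊆ Set.Iio lam ∧ IsClosedIn S lam ∧ ∀ β < lam, ∃ γ ∈ S, β < γ

/-- A condition of the fast club poset: a pair `(c, E)` where `c` is a countable
closed subset of `ω₁` and `E` is a club in `ω₁`. -/
structure FastClubCond : Type 1 where
  c : Set Ordinal.{0}
  E : Set Ordinal.{0}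
  c_sub : c ⊆ Set.Iio omega1
  c_countable : c.Countable
  c_closed : IsClosedIn c omega1
  E_club : IsClubIn E omega1

/-- `q` extends `p` in the fast club poset: `p.c` is an initial segment of `q.c`,
`q.E ⊆ p.E`, and every element of `q.c \ p.c` belongs to `p.E`. -/
def FCExtends (q p : FastClubCond) : Prop :=
  p.c ⊆ q.c ∧ (∀ x ∈ q.c, x ∉ p.c → ∀ y ∈ p.c, y < x) ∧
  q.E ⊆ p.E ∧ ∀ x ∈ q.c, x ∉ p.c → x ∈ p.E

/-!
Two conditions `(c, E)` and `(c, E')` with the same first coordinate are compatible: `E ∩ E'` is a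
club because `ω₁` has uncountable cofinality, so `(c, E ∩ E')` extends both. Hence the first
coordinate is injective on an antichain, and `ω₁` has at most `ℵ₁ ^ ℵ₀ ≤ 𝔠` countable subsets;
under CH, `𝔠 = ℵ₁`.
-/

section

open Cardinal Order Set

variable {S T : Set Ordinal.{0}} {lam : Ordinal.{0}}

theorem isClosedIn_iff_dirSupClosed :
    IsClosedIn S lam ↔ DirSupClosed ((↑) ⁻¹' S : Set (Iio lam)) := by
  constructor
  · intro hS d hd hne _ a ha
    by_cases had : a ∈ d
    · exact hd had
    have lt_of_mem : ∀ γ ∈ d, γ < a := fun γ hγ =>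
      (ha.1 hγ).lt_of_ne (ne_of_mem_of_not_mem hγ had)
    obtain ⟨γ₀, hγ₀⟩ := hne
    refine hS a a.2 (pos_of_gt (lt_of_mem γ₀ hγ₀)) fun β hβ => ?_
    obtain ⟨γ, hγ, hβγ⟩ := (lt_isLUB_iff ha).1 (show (⟨β, hβ.trans a.2⟩ : Iio lam) < a from hβ)
    exact ⟨γ, hd hγ, hβγ, lt_of_mem γ hγ⟩
  · intro hS α hα hpos hacc
    have hlub : IsLUB {γ : Iio lam | ↑γ ∈ S ∧ ↑γ < α} ⟨α, hα⟩ := by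
      refine ⟨fun γ hγ => hγ.2.le, fun b hb => le_of_not_gt fun hbα => ?_⟩
      obtain ⟨γ, hγS, hbγ, hγα⟩ := hacc b hbα
      exact hbγ.not_ge (hb (a := ⟨γ, hγα.trans hα⟩) ⟨hγS, hγα⟩)
    obtain ⟨γ₀, hγ₀S, -, hγ₀α⟩ := hacc 0 hpos
    have hne : {γ : Iio lam | ↑γ ∈ S ∧ ↑γ < α}.Nonempty :=
      ⟨⟨γ₀, hγ₀α.trans hα⟩, hγ₀S, hγ₀α⟩
    exact hS (fun _ hγ => hγ.1) hne (.of_linearOrder _) hlub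

theorem IsClubIn.isSuccPrelimit (hS : IsClubIn S lam) : IsSuccPrelimit lam := by
  intro β hβ
  obtain ⟨γ, hγS, hβγ⟩ := hS.2.2 β hβ.lt
  exact hβ.2 hβγ (hS.1 hγS)

theorem isClubIn_iff_isClub (hlam : IsSuccPrelimit lam) :
    IsClubIn S lam ↔ S ⊆ Iio lam ∧ IsClub ((↑) ⁻¹' S : Set (Iio lam)) := by
  rw [IsClubIn, isClub_iff, isClosedIn_iff_dirSupClosed]
  refine and_congr_right fun hS => and_congr_right fun _ => ⟨fun h β => ?_, fun h β hβ => ?_⟩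
  · obtain ⟨γ, hγS, hβγ⟩ := h β β.2
    exact ⟨⟨γ, hS hγS⟩, hγS, hβγ.le⟩
  · obtain ⟨γ, hγS, hβγ⟩ := h ⟨succ β, hlam.succ_lt hβ⟩
    exact ⟨γ, hγS, succ_le_iff.1 hβγ⟩

theorem IsClubIn.inter (hlam : lam.cof ≠ ℵ₀) (hS : IsClubIn S lam) (hT : IsClubIn T lam) :
    IsClubIn (S ∩ T) lam := by
  have hlim := hS.isSuccPrelimit
  have hcof : Order.cof (Iio lam) ≠ ℵ₀ := by
    rwa [Ordinal.cof_Iio, ← Ordinal.lift_cof, Ne, lift_eq_aleph0]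
  rw [isClubIn_iff_isClub hlim] at hS hT ⊢
  exact ⟨inter_subset_left.trans hS.1, hS.2.inter hcof hT.2⟩

theorem cof_omega1 : omega1.cof = ℵ₁ :=
  isRegular_aleph_one.cof_ord

theorem mk_Iio_omega1 : #(Iio omega1) = ℵ₁ := by
  simp [mk_Iio_ordinal, omega1]

theorem mk_countable_subsets_le_continuum {α : Type*} {s : Set α} (hs : #s ≤ 𝔠) :
    #{t : Set α | t ⊆ s ∧ t.Countable} ≤ 𝔠 := by
  simp only [← le_aleph0_iff_set_countable]
  calc #{t : Set α // t ⊆ s ∧ #t ≤ ℵ₀}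
      ≤ max #s ℵ₀ ^ ℵ₀ := mk_bounded_subset_le s ℵ₀
    _ ≤ 𝔠 ^ ℵ₀ := power_le_power_right (max_le hs aleph0_le_continuum)
    _ = 𝔠 := continuum_power_aleph0

theorem FCExtends.of_c_eq {p q : FastClubCond} (hc : q.c = p.c) (hE : q.E ⊆ p.E) :
    FCExtends q p :=
  ⟨hc.ge, fun _ hx hxp => absurd (hc.le hx) hxp, hE, fun _ hx hxp => absurd (hc.le hx) hxp⟩

theorem FastClubCond.exists_common_extension_of_c_eq {p q : FastClubCond} (hc : p.c = q.c) :
    ∃ r : FastClubCond, FCExtends r p ∧ FCExtends r q := by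
  have hcof : omega1.cof ≠ ℵ₀ := cof_omega1 ▸ aleph0_lt_aleph_one.ne'
  exact ⟨{ p with E := p.E ∩ q.E, E_club := p.E_club.inter hcof q.E_club },
    .of_c_eq rfl inter_subset_left, .of_c_eq hc inter_subset_right⟩

theorem fastClub_aleph2_cc_general (A : Set FastClubCond)
    (hA : ∀ p ∈ A, ∀ q ∈ A, p ≠ q → ¬ ∃ r : FastClubCond, FCExtends r p ∧ FCExtends r q) :
    #A ≤ 𝔠 := by
  have c_injOn : InjOn FastClubCond.c A := fun p hp q hq hc =>
    by_contra fun hne => hA p hp q hq hne (FastClubCond.exists_common_extension_of_c_eq hc)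
  have image_subset : FastClubCond.c '' A ⊆ {t | t ⊆ Iio omega1 ∧ t.Countable} :=
    image_subset_iff.2 fun p _ => ⟨p.c_sub, p.c_countable⟩
  calc #A = #(FastClubCond.c '' A) := (mk_image_eq_of_injOn _ _ c_injOn).symm
    _ ≤ #{t : Set Ordinal | t ⊆ Iio omega1 ∧ t.Countable} := mk_le_mk_of_subset image_subset
    _ ≤ 𝔠 := mk_countable_subsets_le_continuum (mk_Iio_omega1.trans_le aleph_one_le_continuum)

end

/-- Assuming CH, the fast club poset has the ℵ₂-chain condition: every set of
pairwise incompatible conditions has cardinality at most ℵ₁. -/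
theorem fastClub_aleph2_cc
    (hCH : (2 : Cardinal.{1}) ^ Cardinal.aleph 0 = Cardinal.aleph 1)
    (A : Set FastClubCond)
    (hA : ∀ p ∈ A, ∀ q ∈ A, p ≠ q → ¬ ∃ r : FastClubCond, FCExtends r p ∧ FCExtends r q) :
    Cardinal.mk ↥A ≤ Cardinal.aleph 1 := by
  have continuum_eq : Cardinal.continuum = Cardinal.aleph 1 := by
    rw [← hCH, Cardinal.aleph_zero, Cardinal.two_power_aleph0]
  exact (fastClub_aleph2_cc_general A hA).trans_eq continuum_eq
end

section
/- Let λ be an infinite cardinal, and for each ξ < λ let ≺_ξ be a well-order (a well-founded strict linear order) on a set A_ξ. Suppose 𝒲 ⊆ Π_{ξ<λ} A_ξ is a family of functions such that for any two distinct f, g ∈ 𝒲 there exist ξ < λ and ξ' < λ with f(ξ) ≺_ξ g(ξ) and g(ξ') ≺_{ξ'} f(ξ'). Then the cardinality of 𝒲 is at most 2^λ. -/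
universe u

/-!
Say that `a` is `i`-below `b` when `R i a b`. If each `R i` is well-founded and any two distinct
`a`, `b` satisfy `R i a b` for some `i`, then a set `T` closed under realizing common lower bounds
of partial `ι`-indexed families is everything. Indeed, for `g ∉ T` and each `i` such that `g` is
`i`-below some element of `T`, let `c i` be an `R i`-minimal such element. As `g` is a common lower
bound of the family `c`, there is another one, `h`, in `T`; but `g` is `i`-below `h` for some `i`,
so `h` contradicts the minimality of `c i`. On the other hand, the values of the well-founded trees
whose nodes are labelled by subsets `s` of `ι` and have one child for each element of `s` form such
a `T`, and there are at most `2 ^ #ι` of these trees.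
-/

universe v

open Cardinal

theorem mk_wType_le_of_power_le {S : Type u} {P : S → Type u} {κ μ : Cardinal.{u}} (hκ : ℵ₀ ≤ κ)
    (hS : #S ≤ κ) (hP : ∀ s, #(P s) ≤ μ) (hpow : κ ^ μ ≤ κ) : #(WType P) ≤ κ := by
  have hbranch (s : S) : κ ^ #(P s) ≤ κ :=
    (power_le_power_left (aleph0_pos.trans_le hκ).ne' (hP s)).trans hpow
  refine WType.cardinalMk_le_of_le ?_
  calc
    sum (fun s => κ ^ #(P s)) ≤ sum (fun _ : S => κ) := sum_le_sum _ _ hbranch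
    _ = #S * κ := sum_const' S κ
    _ ≤ κ := mul_le_of_le hκ hS le_rfl

theorem mk_wType_set_le_two_power (ι : Type u) [Infinite ι] :
    #(WType fun s : Set ι => s) ≤ 2 ^ #ι := by
  have hι : ℵ₀ ≤ #ι := aleph0_le_mk ι
  have hpow : ((2 : Cardinal) ^ #ι) ^ #ι = 2 ^ #ι := by rw [← power_mul, mul_eq_self hι]
  exact mk_wType_le_of_power_le (hι.trans (cantor _).le) mk_set.le mk_set_le hpow.le

section WellFoundedCover

variable {ι : Type u} {α : Type v} {R : ι → α → α → Prop}

/-- `T` is closed under realizing common lower bounds for `R`: whenever a partial family `c` of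
elements of `T`, defined on a set `s` of indices, has a common lower bound in `α` (an element
`R i`-below `c i` for each `i ∈ s`), it has one in `T`. It stands in for the elementary submodel
closed under `#ι`-sequences in the proof of the Erdős–Rado theorem. -/
def IsLowerBoundClosed (R : ι → α → α → Prop) (T : Set α) : Prop :=
  ∀ (s : Set ι) (c : s → α), (∀ i, c i ∈ T) → (∃ a, ∀ i : s, R i a (c i)) →
    ∃ a ∈ T, ∀ i : s, R i a (c i)

theorem IsLowerBoundClosed.eq_univ {T : Set α} (hT : IsLowerBoundClosed R T)
    (hwf : ∀ i, WellFounded (R i)) (hR : Pairwise fun a b => ∃ i, R i a b) : T = Set.univ := by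
  refine Set.eq_univ_of_forall fun g => by_contra fun hg => ?_
  let above (i : ι) : Set α := {t ∈ T | R i g t}
  let s : Set ι := {i | (above i).Nonempty}
  have exists_minimal (i : s) : ∃ t ∈ above i, ∀ x ∈ above i, ¬ R i x t :=
    (hwf i).has_min (above i) i.2
  choose c hc hmin using exists_minimal
  obtain ⟨h, hhT, hhc⟩ := hT s c (fun i => (hc i).1) ⟨g, fun i => (hc i).2⟩
  have hgh : g ≠ h := fun e => hg (e ▸ hhT)
  obtain ⟨i, hi⟩ := hR hgh
  have hh : h ∈ above i := ⟨hhT, hi⟩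
  let j : s := ⟨i, h, hh⟩
  exact hmin j h hh (hhc j)

theorem exists_isLowerBoundClosed_lift_mk_le [Infinite ι] (R : ι → α → α → Prop) :
    ∃ T : Set α, IsLowerBoundClosed R T ∧ lift.{u} #T ≤ lift.{v} (2 ^ #ι) := by
  rcases isEmpty_or_nonempty α with _ | _
  · exact ⟨∅, fun _ _ _ ⟨a, _⟩ => isEmptyElim a, by simp⟩
  -- Junk unless the family `p` has a common lower bound.
  let lowerBound (p : Σ s : Set ι, s → α) : α := Classical.epsilon fun a =>
    ∀ i : p.1, R i a (p.2 i)
  let value : (WType fun s : Set ι => s) → α := WType.elim α lowerBound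
  refine ⟨Set.range value, fun s c hc hbound => ?_,
    mk_range_le_lift.trans (lift_le.2 (mk_wType_set_le_two_power ι))⟩
  choose w hw using hc
  obtain rfl : (fun i => value (w i)) = c := funext hw
  exact ⟨value ⟨s, w⟩, Set.mem_range_self _, Classical.epsilon_spec hbound⟩

theorem lift_mk_le_lift_two_power_of_wellFounded [Infinite ι] (hwf : ∀ i, WellFounded (R i))
    (hR : Pairwise fun a b => ∃ i, R i a b) : lift.{u} #α ≤ lift.{v} (2 ^ #ι) := by
  obtain ⟨T, hT, hcard⟩ := exists_isLowerBoundClosed_lift_mk_le R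
  rwa [hT.eq_univ hwf hR, mk_univ] at hcard

end WellFoundedCover

theorem erdosRado_antichain_bound_general {ι : Type u} [Infinite ι] {A : ι → Type v}
    {r : ∀ ξ, A ξ → A ξ → Prop} (hr : ∀ ξ, WellFounded (r ξ)) {W : Set (∀ ξ, A ξ)}
    (hW : W.Pairwise fun f g => ∃ ξ, r ξ (f ξ) (g ξ)) : #W ≤ lift.{v} (2 ^ #ι) := by
  have hwf (ξ : ι) : WellFounded fun f g : W => r ξ (f.1 ξ) (g.1 ξ) :=
    InvImage.wf (fun f : W => f.1 ξ) (hr ξ)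
  have hpair : Pairwise fun f g : W => ∃ ξ, r ξ (f.1 ξ) (g.1 ξ) := fun f g hfg =>
    hW f.2 g.2 (Subtype.coe_injective.ne hfg)
  have hcard := lift_mk_le_lift_two_power_of_wellFounded hwf hpair
  rwa [lift_id'.{u, v}, lift_umax.{u, v}] at hcard

/-- Let `lam` be an infinite cardinal, `ι` an index set of cardinality `lam`,
and for each `ξ : ι` let `r ξ` be a well-order on `A ξ`.  If `W` is a family of
functions in the product `∀ ξ, A ξ` such that any two distinct members `f, g`
of `W` satisfy `f ξ ≺_ξ g ξ` at some coordinate `ξ` and `g ξ' ≺_{ξ'} f ξ'` at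
some coordinate `ξ'`, then `W` has cardinality at most `2 ^ lam`. -/
theorem erdosRado_antichain_bound (lam : Cardinal.{u}) (hlam : Cardinal.aleph0 ≤ lam)
    (ι : Type u) (hι : Cardinal.mk ι = lam)
    (A : ι → Type u) (r : ∀ ξ, A ξ → A ξ → Prop)
    (hr : ∀ ξ, IsWellOrder (A ξ) (r ξ))
    (W : Set (∀ ξ, A ξ))
    (hW : ∀ f ∈ W, ∀ g ∈ W, f ≠ g →
      (∃ ξ, r ξ (f ξ) (g ξ)) ∧ ∃ ξ', r ξ' (g ξ') (f ξ')) :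
    Cardinal.mk ↥W ≤ 2 ^ lam := by
  subst hι
  have : Infinite ι := infinite_iff.2 hlam
  simpa using erdosRado_antichain_bound_general (fun ξ => (hr ξ).wf)
    fun f hf g hg hfg => (hW f hf g hg hfg).1
end

section
/- For all bistationary sets S, S' ⊆ ω₁, the linear orders Φ(S) and Φ(S') are order-isomorphic if and only if the symmetric difference S △ S' is nonstationary in ω₁. -/
/-- `S` is stationary in `ω₁`: it meets every club in `ω₁`. -/
def IsStationaryIn (S : Set Ordinal.{0}) : Prop :=
  ∀ C : Set Ordinal.{0}, IsClubIn C omega1 → (S ∩ C).Nonempty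

/-- The ordinals below `ω₁`. -/
def SmallOrd : Type 1 := {α : Ordinal.{0} // α < omega1}

noncomputable instance : LinearOrder SmallOrd := Subtype.instLinearOrder _

/-- The underlying set of the linear order `Φ(S) = η + Σ_{α<ω₁} η_α`, realized
inside the lexicographic product `(WithBot SmallOrd) ×ₗ ℚ`: the fiber over `⊥`
is a copy of `η`; the fiber over `α ∈ S` is `{q : ℚ | 0 ≤ q} ≅ 1 + η`; and the
fiber over `α ∉ S` is `ℚ ≅ η`.  It carries the induced (lexicographic) linear
order. -/
def PhiSet (S : Set Ordinal.{0}) : Set (Lex (WithBot SmallOrd × ℚ)) :=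
  {x | ∀ a : SmallOrd, (ofLex x).1 = (a : WithBot SmallOrd) → a.1 ∈ S → 0 ≤ (ofLex x).2}

/-!
Grouping the summands of `Φ(S)` along a club `C ⊆ ω₁` makes each group a countable dense order
without maximum, whose minimum, if there is one, sits at an element of `C ∩ S`. By Cantor's theorem
`Φ(S)` therefore depends only on `C ∩ S`. Conversely, consider an isomorphism `Φ(S) ≃o Φ(S')`. The
ordinals `d` such that neither it nor its inverse moves a point of index below `d` to one of index
at least `d` form a club. For such `d` it maps the final segment starting with the `d`-th summand
onto the corresponding final segment, and comparing their minima gives `d ∈ S ↔ d ∈ S'`.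
-/

open Set Order

theorem nonempty_orderIso_of_fiberwise {α β γ : Type*} [LinearOrder α] [LinearOrder β]
    [PartialOrder γ] {p : α → γ} {q : β → γ} (hp : Monotone p) (hq : Monotone q)
    (h : ∀ c, Nonempty (p ⁻¹' {c} ≃o q ⁻¹' {c})) : Nonempty (α ≃o β) := by
  let e (c : γ) : p ⁻¹' {c} ≃o q ⁻¹' {c} := (h c).some
  let F : α ≃ β := Equiv.ofFiberEquiv fun c ↦ (e c).toEquiv
  have q_F (x : α) : q (F x) = p x := Equiv.ofFiberEquiv_map _ x
  have F_eq {c : γ} {x : α} (hx : p x = c) : F x = e c ⟨x, hx⟩ := by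
    subst hx
    rfl
  have hF : StrictMono F := by
    intro x y hxy
    rcases (hp hxy.le).lt_or_eq with hlt | heq
    · exact hq.reflect_lt (by rwa [q_F, q_F])
    · rw [F_eq heq, F_eq rfl]
      exact (e (p y)).strictMono hxy
  exact ⟨hF.orderIsoOfSurjective F F.surjective⟩

theorem nonempty_orderIso_of_countable_dense_noMaxOrder {α β : Type*} [LinearOrder α]
    [LinearOrder β] [Nonempty α] [Nonempty β] [Countable α] [Countable β] [DenselyOrdered α]
    [DenselyOrdered β] [NoMaxOrder α] [NoMaxOrder β]
    (h : (∃ a : α, IsBot a) ↔ ∃ b : β, IsBot b) : Nonempty (α ≃o β) := by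
  classical
  by_cases hα : ∃ a : α, IsBot a
  · obtain ⟨a, ha⟩ := hα
    obtain ⟨b, hb⟩ := h.1 ⟨a, ha⟩
    let _ : OrderBot α := { bot := a, bot_le := ha }
    let _ : OrderBot β := { bot := b, bot_le := hb }
    obtain ⟨e⟩ : Nonempty (Ioi (⊥ : α) ≃o Ioi (⊥ : β)) := iso_of_countable_dense _ _
    let e' : {x : α // x ≠ ⊥} ≃o {y : β // y ≠ ⊥} :=
      (OrderIso.setCongr {x | x ≠ ⊥} (Ioi ⊥) (by ext; exact bot_lt_iff_ne_bot.symm)).trans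
        (e.trans (OrderIso.setCongr (Ioi ⊥) {y | y ≠ ⊥} (by ext; exact bot_lt_iff_ne_bot)))
    exact ⟨WithBot.subtypeOrderIso.symm.trans (e'.withBotCongr.trans WithBot.subtypeOrderIso)⟩
  · have hβ : ¬ ∃ b : β, IsBot b := mt h.2 hα
    have : NoBotOrder α := ⟨by simpa [IsBot] using hα⟩
    have : NoBotOrder β := ⟨by simpa [IsBot] using hβ⟩
    have := NoBotOrder.to_noMinOrder α
    have := NoBotOrder.to_noMinOrder β
    exact iso_of_countable_dense α β

theorem countable_Iio_withBot {α : Type*} [Preorder α] (h : ∀ a : α, (Iio a).Countable)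
    (k : WithBot α) : (Iio k).Countable := by
  cases k with
  | bot => simp
  | coe a =>
    refine (((h a).image (↑)).insert ⊥).mono fun b hb ↦ ?_
    cases b with
    | bot => exact .inl rfl
    | coe b => exact .inr ⟨b, WithBot.coe_lt_coe.1 hb, rfl⟩

theorem isCofinal_range_withBot_coe {α : Type*} [Preorder α] [Nonempty α] :
    IsCofinal (range ((↑) : α → WithBot α)) := by
  intro k
  cases k with
  | bot => exact ⟨_, mem_range_self (Classical.arbitrary α), bot_le⟩
  | coe a => exact ⟨a, mem_range_self a, le_rfl⟩

theorem cof_withBot {α : Type*} [LinearOrder α] [Nonempty α] : cof (WithBot α) = cof α :=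
  (cof_congr_of_strictMono WithBot.coe_strictMono isCofinal_range_withBot_coe).symm

section Club

variable {κ : Type*} [LinearOrder κ] [WellFoundedLT κ] {C : Set κ}

theorem exists_isLUB_of_bddAbove {s : Set κ} (hs : BddAbove s) : ∃ d, IsLUB s d :=
  ⟨_, wellFounded_lt.min_mem _ hs, fun _ hc ↦ not_lt.1 (wellFounded_lt.not_lt_min _ hc)⟩

theorem isClub_setOf_forall_lt [NoMaxOrder κ] (hκ : cof κ ≠ Cardinal.aleph0) {h : κ → κ}
    (hh : Monotone h) : IsClub {d | ∀ k < d, h k < d} := by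
  refine ⟨fun t ht _ _ d hd k hk ↦ ?_, fun b ↦ ?_⟩
  · obtain ⟨c, hc, hkc, -⟩ := hd.exists_between hk
    exact (ht hc k hkc).trans_le (hd.1 hc)
  have : Nonempty κ := ⟨b⟩
  choose g hg using fun k ↦ exists_gt (max k (h k))
  have hbdd : BddAbove (range fun n ↦ g^[n] b) := by
    refine .of_not_isCofinal fun hcof ↦ hκ (aleph0_le_cof.antisymm' ?_)
    exact (cof_le hcof).trans (countable_range _).le_aleph0
  obtain ⟨d, hd⟩ := exists_isLUB_of_bddAbove hbdd
  refine ⟨d, fun k hk ↦ ?_, hd.1 ⟨0, rfl⟩⟩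
  obtain ⟨_, ⟨n, rfl⟩, hkn, -⟩ := hd.exists_between hk
  calc h k ≤ h (g^[n] b) := hh hkn.le
    _ < g (g^[n] b) := (le_max_right _ _).trans_lt (hg _)
    _ = g^[n + 1] b := (Function.iterate_succ_apply' g n b).symm
    _ ≤ d := hd.1 ⟨n + 1, rfl⟩

theorem exists_isGreatest_insert_bot_inter_Iic [OrderBot κ] (hC : DirSupClosed C) (k : κ) :
    ∃ d, IsGreatest (insert ⊥ C ∩ Iic k) d := by
  by_cases hne : (C ∩ Iic k).Nonempty
  · have hbdd : BddAbove (C ∩ Iic k) := bddAbove_Iic.mono inter_subset_right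
    obtain ⟨d, hd⟩ := exists_isLUB_of_bddAbove hbdd
    refine ⟨d, ⟨.inr (hC inter_subset_left hne (.of_linearOrder _) hd),
      hd.2 fun c hc ↦ hc.2⟩, ?_⟩
    rintro c ⟨rfl | hc, hck⟩
    · exact bot_le
    · exact hd.1 ⟨hc, hck⟩
  · refine ⟨⊥, ⟨.inl rfl, bot_le⟩, ?_⟩
    rintro c ⟨rfl | hc, hck⟩
    · exact le_rfl
    · exact (hne ⟨c, hc, hck⟩).elim

theorem exists_galoisConnection_insert_bot [OrderBot κ] (hC : DirSupClosed C) :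
    ∃ u : κ → ↥(insert ⊥ C), GaloisConnection Subtype.val u := by
  choose u hu using exists_isGreatest_insert_bot_inter_Iic hC
  exact ⟨fun k ↦ ⟨u k, (hu k).1.1⟩, fun d k ↦
    ⟨fun hdk ↦ (hu k).2 ⟨d.2, hdk⟩, fun hdk ↦ le_trans hdk (hu k).1.2⟩⟩

end Club

/-- The lexicographic sum `Σ_{k ∈ κ} η_k` over a linear order `κ`, where `η_k` is `1 + η`, encoded
as `{q : ℚ | 0 ≤ q}`, for `k ∈ T`, and `η`, encoded as `ℚ`, for `k ∉ T`. -/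
def etaSum {κ : Type*} (T : Set κ) : Set (κ ×ₗ ℚ) :=
  {x | (ofLex x).1 ∈ T → 0 ≤ (ofLex x).2}

namespace etaSum

variable {κ : Type*} {T T' : Set κ} {I : Set κ} {d : κ}

/-- The index of the summand containing a point of the sum. -/
def index (x : etaSum T) : κ := (ofLex x.1).1

/-- The coordinate of a point of the sum within its summand. -/
def coord (x : etaSum T) : ℚ := (ofLex x.1).2

/-- The point with coordinate `q` in the summand with index `k`. -/
def mk (k : κ) (q : ℚ) (h : k ∈ T → 0 ≤ q) : etaSum T := ⟨toLex (k, q), h⟩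

@[simp]
theorem index_mk (k : κ) (q : ℚ) (h : k ∈ T → 0 ≤ q) : index (mk k q h) = k := rfl

@[simp]
theorem coord_mk (k : κ) (q : ℚ) (h : k ∈ T → 0 ≤ q) : coord (mk k q h) = q := rfl

theorem coord_nonneg (x : etaSum T) (hx : index x ∈ T) : 0 ≤ coord x := x.2 hx

theorem countable_index_preimage (hI : I.Countable) :
    (index ⁻¹' I : Set (etaSum T)).Countable := by
  have hinj : Function.Injective fun x : etaSum T ↦ (index x, coord x) :=
    fun _ _ h ↦ Subtype.ext (congrArg toLex h)
  exact ((hI.prod countable_univ).preimage hinj).mono fun x hx ↦ mk_mem_prod hx (mem_univ (coord x))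

variable [LinearOrder κ]

theorem lt_iff {x y : etaSum T} :
    x < y ↔ index x < index y ∨ index x = index y ∧ coord x < coord y :=
  Prod.Lex.lt_iff

theorem le_iff {x y : etaSum T} :
    x ≤ y ↔ index x < index y ∨ index x = index y ∧ coord x ≤ coord y :=
  Prod.Lex.le_iff

theorem monotone_index : Monotone (index : etaSum T → κ) :=
  fun _ _ h ↦ Prod.Lex.monotone_fst_ofLex h

theorem exists_gt_index_eq (x : etaSum T) : ∃ y, x < y ∧ index y = index x :=
  ⟨mk (index x) (coord x + 1) fun hx ↦ (coord_nonneg x hx).trans (lt_add_one _).le,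
    lt_iff.2 (.inr ⟨rfl, lt_add_one _⟩), rfl⟩

theorem exists_between_index_eq {x y : etaSum T} (hxy : x < y) :
    ∃ z, x < z ∧ z < y ∧ index z = index x := by
  rcases lt_iff.1 hxy with hlt | ⟨heq, hlt⟩
  · obtain ⟨z, hxz, hz⟩ := exists_gt_index_eq x
    exact ⟨z, hxz, lt_iff.2 (.inl (hz ▸ hlt)), hz⟩
  · obtain ⟨q, hxq, hqy⟩ := exists_between hlt
    exact ⟨mk (index x) q fun hx ↦ (coord_nonneg x hx).trans hxq.le,
      lt_iff.2 (.inr ⟨rfl, hxq⟩), lt_iff.2 (.inr ⟨heq, hqy⟩), rfl⟩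

instance : DenselyOrdered (index ⁻¹' I : Set (etaSum T)) where
  dense := by
    rintro ⟨x, hx⟩ ⟨y, _⟩ hxy
    obtain ⟨z, hxz, hzy, hz⟩ := exists_between_index_eq hxy
    exact ⟨⟨z, mem_of_eq_of_mem (x := index z) hz hx⟩, hxz, hzy⟩

instance : NoMaxOrder (index ⁻¹' I : Set (etaSum T)) where
  exists_gt := by
    rintro ⟨x, hx⟩
    obtain ⟨y, hxy, hy⟩ := exists_gt_index_eq x
    exact ⟨⟨y, mem_of_eq_of_mem (x := index y) hy hx⟩, hxy⟩

theorem exists_isLeast_index_preimage_iff (hd : IsLeast I d) :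
    (∃ x, IsLeast (index ⁻¹' I : Set (etaSum T)) x) ↔ d ∈ T := by
  constructor
  · rintro ⟨x, hxI, hx⟩
    by_contra hdT
    have hlt : mk d (coord x - 1) (absurd · hdT) < x := by
      refine lt_iff.2 ?_
      rcases (hd.2 hxI).lt_or_eq with hlt | heq
      · exact .inl hlt
      · exact .inr ⟨heq, sub_one_lt _⟩
    exact (hx hd.1).not_gt hlt
  · refine fun hdT ↦ ⟨mk d 0 fun _ ↦ le_rfl, hd.1, fun y hy ↦ le_iff.2 ?_⟩
    rcases (hd.2 hy).lt_or_eq with hlt | heq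
    · exact .inl hlt
    · exact .inr ⟨heq, coord_nonneg y (heq ▸ hdT)⟩

theorem nonempty_orderIso_index_preimage (hI : I.Countable) (hd : IsLeast I d)
    (hT : d ∈ T ↔ d ∈ T') :
    Nonempty ((index ⁻¹' I : Set (etaSum T)) ≃o (index ⁻¹' I : Set (etaSum T'))) := by
  have exists_isBot_iff (U : Set κ) :
      (∃ x : (index ⁻¹' I : Set (etaSum U)), IsBot x) ↔ d ∈ U := by
    rw [← exists_isLeast_index_preimage_iff hd]
    simp [IsBot, IsLeast, mem_lowerBounds]
  have (U : Set κ) : Nonempty (index ⁻¹' I : Set (etaSum U)) :=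
    ⟨mk d 0 fun _ ↦ le_rfl, hd.1⟩
  have (U : Set κ) : Countable (index ⁻¹' I : Set (etaSum U)) := countable_index_preimage hI
  exact nonempty_orderIso_of_countable_dense_noMaxOrder
    (by rw [exists_isBot_iff, exists_isBot_iff, hT])

theorem nonempty_orderIso_of_galoisConnection {D : Type*} [PartialOrder D] {l : D → κ} {u : κ → D}
    (gc : GaloisConnection l u) (hl : Function.Injective l) (hu : ∀ d, (u ⁻¹' {d}).Countable)
    (hT : ∀ d, l d ∈ T ↔ l d ∈ T') : Nonempty (etaSum T ≃o etaSum T') := by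
  refine nonempty_orderIso_of_fiberwise (p := u ∘ index) (q := u ∘ index)
    (gc.monotone_u.comp monotone_index) (gc.monotone_u.comp monotone_index) fun d ↦ ?_
  have hd : IsLeast (u ⁻¹' {d}) (l d) := ⟨hl (gc.l_u_l_eq_l d), fun k hk ↦ gc.l_le hk.ge⟩
  exact nonempty_orderIso_index_preimage (hu d) hd (hT d)

theorem nonempty_orderIso_of_isClub [OrderBot κ] [WellFoundedLT κ] [NoMaxOrder κ]
    (hκ : ∀ k : κ, (Iio k).Countable) {C : Set κ} (hC : IsClub C)
    (hT : ∀ d ∈ insert ⊥ C, d ∈ T ↔ d ∈ T') : Nonempty (etaSum T ≃o etaSum T') := by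
  obtain ⟨u, gc⟩ := exists_galoisConnection_insert_bot hC.dirSupClosed
  refine nonempty_orderIso_of_galoisConnection gc Subtype.val_injective (fun d ↦ ?_)
    fun d ↦ hT d d.2
  obtain ⟨b, hdb⟩ := exists_gt (d : κ)
  obtain ⟨c, hc, hbc⟩ := hC.isCofinal b
  refine (hκ c).mono fun k hk ↦ lt_of_not_ge fun hck ↦ ?_
  have hcd : c ≤ d := hk ▸ (gc ⟨c, .inr hc⟩ k).1 hck
  exact (hdb.trans_le hbc).not_ge hcd

theorem mem_iff_mem_of_le_index_iff (f : etaSum T ≃o etaSum T')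
    (hf : ∀ x, d ≤ index (f x) ↔ d ≤ index x) : d ∈ T ↔ d ∈ T' := by
  rw [← exists_isLeast_index_preimage_iff isLeast_Ici,
    ← exists_isLeast_index_preimage_iff isLeast_Ici]
  simp only [IsLeast, mem_lowerBounds, mem_preimage, mem_Ici, f.surjective.exists,
    f.surjective.forall, f.le_iff_le, hf]

theorem exists_monotone_index_apply_le [WellFoundedLT κ] [NoMaxOrder κ]
    (f : etaSum T ≃o etaSum T') :
    ∃ h : κ → κ, Monotone h ∧ ∀ x, index (f x) ≤ h (index x) := by
  let _ : SuccOrder κ := SuccOrder.ofLinearWellFoundedLT κ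
  let y (k : κ) : etaSum T := mk (succ k) 0 fun _ ↦ le_rfl
  have hy : Monotone y := fun k k' hk ↦ le_iff.2 <| by
    simpa [y, ← le_iff_lt_or_eq] using hk
  refine ⟨fun k ↦ index (f (y k)), monotone_index.comp (f.monotone.comp hy), fun x ↦ ?_⟩
  exact monotone_index (f.monotone (lt_iff.2 (.inl (lt_succ (index x)))).le)

theorem not_isStationary_symmDiff_of_orderIso [WellFoundedLT κ] [NoMaxOrder κ]
    (hκ : cof κ ≠ Cardinal.aleph0) (f : etaSum T ≃o etaSum T') :
    ¬ IsStationary (symmDiff T T') := by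
  obtain ⟨h, hh, hf⟩ := exists_monotone_index_apply_le f
  obtain ⟨h', hh', hf'⟩ := exists_monotone_index_apply_le f.symm
  refine not_isStationary_iff.2 ⟨_, isClub_setOf_forall_lt hκ (hh.max hh'), ?_⟩
  refine disjoint_right.2 fun d hd hdT ↦ ?_
  have hlt (x : etaSum T) : index (f x) < d ↔ index x < d := by
    refine ⟨fun hx ↦ ?_, fun hx ↦ ?_⟩
    · simpa using (hf' (f x)).trans_lt ((le_max_right _ _).trans_lt (hd _ hx))
    · exact (hf x).trans_lt ((le_max_left _ _).trans_lt (hd _ hx))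
  have hmem : d ∈ T ↔ d ∈ T' := mem_iff_mem_of_le_index_iff f fun x ↦ by simpa using (hlt x).not
  rw [mem_symmDiff] at hdT
  tauto

theorem nonempty_orderIso_iff_not_isStationary_symmDiff [OrderBot κ] [WellFoundedLT κ]
    [NoMaxOrder κ] (hcount : ∀ k : κ, (Iio k).Countable) (hcof : cof κ ≠ Cardinal.aleph0)
    (hbot : ⊥ ∈ T ↔ ⊥ ∈ T') :
    Nonempty (etaSum T ≃o etaSum T') ↔ ¬ IsStationary (symmDiff T T') := by
  refine ⟨fun ⟨f⟩ ↦ not_isStationary_symmDiff_of_orderIso hcof f, fun h ↦ ?_⟩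
  obtain ⟨C, hC, hdisj⟩ := not_isStationary_iff.1 h
  refine nonempty_orderIso_of_isClub hcount hC ?_
  rintro d (rfl | hd)
  · exact hbot
  · have hdT : d ∉ symmDiff T T' := disjoint_right.1 hdisj hd
    rw [mem_symmDiff] at hdT
    tauto

end etaSum

theorem omega1_eq : omega1 = Ordinal.omega 1 := by simp [omega1]

namespace SmallOrd

instance : WellFoundedLT SmallOrd := inferInstanceAs (WellFoundedLT (Iio omega1))

instance : NoMaxOrder SmallOrd where
  exists_gt a := by
    have hlim : IsSuccLimit omega1 := by
      rw [omega1_eq]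
      exact Cardinal.isSuccLimit_omega 1
    exact ⟨⟨succ a.1, hlim.succ_lt a.2⟩, lt_succ a.1⟩

instance : Nonempty SmallOrd := by
  have hpos : 0 < omega1 := by
    rw [omega1_eq]
    exact Ordinal.omega_pos 1
  exact ⟨⟨0, hpos⟩⟩

theorem countable_Iio (a : SmallOrd) : (Iio a).Countable := by
  have ha : a.1.card ≤ Cardinal.aleph0 :=
    Cardinal.lt_aleph_one_iff.1 (Cardinal.lt_ord.1 a.2)
  have hcount : (Iio a.1).Countable := by
    rw [← Cardinal.le_aleph0_iff_set_countable, Cardinal.mk_Iio_ordinal]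
    exact Cardinal.lift_le_aleph0.2 ha
  exact hcount.preimage Subtype.val_injective

theorem coe_lt_coe {a b : SmallOrd} : (a : WithBot SmallOrd) < b ↔ a.1 < b.1 :=
  WithBot.coe_lt_coe

theorem cof_eq : cof SmallOrd = Cardinal.aleph 1 :=
  calc cof SmallOrd = (Ordinal.lift omega1).cof := Ordinal.cof_Iio omega1
    _ = Cardinal.aleph 1 := by simp [omega1_eq]

end SmallOrd

/-- The indices `α ∈ S` of the summands `1 + η` of `Φ(S)`, as elements of the index set of
`PhiSet S`, in which `⊥` stands for the initial summand `η`. -/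
def endpointIndices (S : Set Ordinal.{0}) : Set (WithBot SmallOrd) :=
  (↑) '' (Subtype.val ⁻¹' S : Set SmallOrd)

section endpointIndices

variable {S : Set Ordinal.{0}}

theorem coe_mem_endpointIndices {a : SmallOrd} :
    (a : WithBot SmallOrd) ∈ endpointIndices S ↔ a.1 ∈ S :=
  WithBot.coe_injective.mem_set_image

theorem bot_notMem_endpointIndices : ⊥ ∉ endpointIndices S := by
  rintro ⟨a, -, ha⟩
  exact WithBot.coe_ne_bot ha

theorem endpointIndices_symmDiff (S S' : Set Ordinal.{0}) :
    endpointIndices (symmDiff S S') = symmDiff (endpointIndices S) (endpointIndices S') :=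
  image_symmDiff WithBot.coe_injective _ _

theorem phiSet_eq_etaSum (S : Set Ordinal.{0}) : PhiSet S = etaSum (endpointIndices S) := by
  ext x
  constructor
  · rintro hx ⟨a, ha, hax⟩
    exact hx a hax.symm ha
  · exact fun hx a hax ha ↦ hx ⟨a, ha, hax.symm⟩

theorem IsClubIn.isClub_endpointIndices (hS : IsClubIn S omega1) :
    IsClub (endpointIndices S) := by
  obtain ⟨hsub, hclosed, hunbdd⟩ := hS
  refine ⟨fun t ht ⟨c, hct⟩ _ k hk ↦ ?_, fun k ↦ ?_⟩
  · by_cases hkt : k ∈ t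
    · exact ht hkt
    have hlt {b : WithBot SmallOrd} (hb : b ∈ t) : b < k :=
      (hk.1 hb).lt_of_ne (ne_of_mem_of_not_mem hb hkt)
    lift k to SmallOrd using (hlt hct).ne_bot
    obtain ⟨c, -, rfl⟩ := ht hct
    have hck : c.1 < k.1 := SmallOrd.coe_lt_coe.1 (hlt hct)
    refine coe_mem_endpointIndices.2 (hclosed k.1 k.2 (pos_of_gt hck) fun β hβ ↦ ?_)
    let b : SmallOrd := ⟨β, hβ.trans k.2⟩
    have hbk : (b : WithBot SmallOrd) < k := SmallOrd.coe_lt_coe.2 hβ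
    obtain ⟨c', hct', hbc', -⟩ := hk.exists_between hbk
    obtain ⟨c', hc', rfl⟩ := ht hct'
    exact ⟨c'.1, hc', SmallOrd.coe_lt_coe.1 hbc', SmallOrd.coe_lt_coe.1 (hlt hct')⟩
  · obtain ⟨_, ⟨a, rfl⟩, hka⟩ := isCofinal_range_withBot_coe k
    obtain ⟨γ, hγ, haγ⟩ := hunbdd a.1 a.2
    let c : SmallOrd := ⟨γ, hsub hγ⟩
    have hac : (a : WithBot SmallOrd) < c := SmallOrd.coe_lt_coe.2 haγ
    exact ⟨c, coe_mem_endpointIndices.2 hγ, hka.trans hac.le⟩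

theorem isClubIn_image_val_of_isClub {C : Set (WithBot SmallOrd)} (hC : IsClub C) :
    IsClubIn (Subtype.val '' {a : SmallOrd | (a : WithBot SmallOrd) ∈ C}) omega1 := by
  refine ⟨?_, fun α hα hpos hlim ↦ ?_, fun β hβ ↦ ?_⟩
  · rintro _ ⟨a, -, rfl⟩
    exact a.2
  · obtain ⟨a, rfl⟩ : ∃ a : SmallOrd, a.1 = α := ⟨⟨α, hα⟩, rfl⟩
    have exists_between_mem : ∀ b < (a : WithBot SmallOrd), ∃ c ∈ C, b < c ∧ c < a := by
      intro b hb
      cases b with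
      | bot =>
        obtain ⟨_, ⟨c : SmallOrd, hc, rfl⟩, -, hca⟩ := hlim 0 hpos
        exact ⟨(c : WithBot SmallOrd), hc, WithBot.bot_lt_coe c, SmallOrd.coe_lt_coe.2 hca⟩
      | coe b =>
        obtain ⟨_, ⟨c : SmallOrd, hc, rfl⟩, hbc, hca⟩ := hlim b.1 (SmallOrd.coe_lt_coe.1 hb)
        exact ⟨(c : WithBot SmallOrd), hc, SmallOrd.coe_lt_coe.2 hbc, SmallOrd.coe_lt_coe.2 hca⟩
    have hne : (C ∩ Iio ↑a).Nonempty := by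
      obtain ⟨c, hc, -, hca⟩ := exists_between_mem ⊥ (WithBot.bot_lt_coe a)
      exact ⟨c, hc, hca⟩
    have hlub : IsLUB (C ∩ Iio ↑a) a := by
      refine ⟨fun c hc ↦ hc.2.le, fun b hb ↦ le_of_not_gt fun hba ↦ ?_⟩
      obtain ⟨c, hc, hbc, hca⟩ := exists_between_mem b hba
      exact (hb ⟨hc, hca⟩).not_gt hbc
    exact ⟨a, hC.dirSupClosed inter_subset_left hne (.of_linearOrder _) hlub, rfl⟩
  · let a : SmallOrd := ⟨β, hβ⟩
    obtain ⟨b, hb⟩ := exists_gt a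
    obtain ⟨c, hc, hbc⟩ := hC.isCofinal b
    lift c to SmallOrd using ((WithBot.bot_lt_coe b).trans_le hbc).ne_bot
    exact ⟨c.1, ⟨c, hc, rfl⟩, hb.trans_le (WithBot.coe_le_coe.1 hbc)⟩

theorem isStationaryIn_iff_isStationary_endpointIndices :
    IsStationaryIn S ↔ IsStationary (endpointIndices S) := by
  constructor
  · intro hS C hC
    obtain ⟨_, ha, ⟨a : SmallOrd, haC, rfl⟩⟩ := hS _ (isClubIn_image_val_of_isClub hC)
    exact ⟨(a : WithBot SmallOrd), coe_mem_endpointIndices.2 ha, haC⟩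
  · intro hS C hC
    obtain ⟨_, ⟨a, ha, rfl⟩, haC⟩ := hS hC.isClub_endpointIndices
    exact ⟨a.1, ha, coe_mem_endpointIndices.1 haC⟩

end endpointIndices

theorem phi_iso_iff_symmDiff_nonstationary_general (S S' : Set Ordinal.{0}) :
    Nonempty (↥(PhiSet S) ≃o ↥(PhiSet S')) ↔ ¬ IsStationaryIn (symmDiff S S') := by
  have hcof : cof (WithBot SmallOrd) ≠ Cardinal.aleph0 := by
    rw [cof_withBot, SmallOrd.cof_eq]
    exact Cardinal.aleph0_lt_aleph_one.ne'
  rw [phiSet_eq_etaSum, phiSet_eq_etaSum, isStationaryIn_iff_isStationary_endpointIndices,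
    endpointIndices_symmDiff]
  exact etaSum.nonempty_orderIso_iff_not_isStationary_symmDiff
    (countable_Iio_withBot SmallOrd.countable_Iio) hcof
    (iff_of_false bot_notMem_endpointIndices bot_notMem_endpointIndices)

/-- For bistationary `S, S' ⊆ ω₁`, the linear orders `Φ(S)` and `Φ(S')` are
order-isomorphic iff the symmetric difference `S ∆ S'` is nonstationary. -/
theorem phi_iso_iff_symmDiff_nonstationary (S S' : Set Ordinal.{0})
    (hS : S ⊆ Set.Iio omega1) (hS' : S' ⊆ Set.Iio omega1)
    (hSbi : IsStationaryIn S ∧ IsStationaryIn (Set.Iio omega1 \ S))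
    (hS'bi : IsStationaryIn S' ∧ IsStationaryIn (Set.Iio omega1 \ S')) :
    Nonempty (↥(PhiSet S) ≃o ↥(PhiSet S')) ↔ ¬ IsStationaryIn (symmDiff S S') := by
  exact phi_iso_iff_symmDiff_nonstationary_general S S'
end

section
/- Let X, Y, Z be pairwise disjoint sets of ordinals such that (X ∪ Y, Z) is an interlace. Define z ∼ z' for z, z' ∈ Z iff the open ordinal interval between min(z,z') and max(z,z') contains no element of X ∪ Y. Then ∼ is an equivalence relation on Z with infinitely many equivalence classes; moreover, listing the first ω equivalence classes [z_0], [z_1], [z_2], … in increasing order, for every n < ω the set {α ∈ X ∪ Y : every element of [z_n] is below α and α is below every element of [z_{n+1}]} is nonempty. Consequently the triple (X, Y, Z) codes a unique subset a ⊆ ω via the rule: n ∈ a iff the least α ∈ X ∪ Y lying strictly between the classes [z_n] and [z_{n+1}] belongs to X. -/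
/-- A pair `(A, B)` of nonempty disjoint sets of ordinals is an interlace if
above every element of `A` there is an element of `B` and vice versa. -/
def Interlace (A B : Set Ordinal.{0}) : Prop :=
  A.Nonempty ∧ B.Nonempty ∧ Disjoint A B ∧
  (∀ a ∈ A, ∃ b ∈ B, a < b) ∧ (∀ b ∈ B, ∃ a ∈ A, b < a)

/-- `z ∼ z'` (relative to `X, Y`): the open ordinal interval between
`min z z'` and `max z z'` contains no element of `X ∪ Y`. -/
def Sim (X Y : Set Ordinal.{0}) (z z' : Ordinal.{0}) : Prop :=
  ∀ α ∈ X ∪ Y, ¬ (min z z' < α ∧ α < max z z')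

/-!
For points outside `A = X ∪ Y`, being unseparated by `A` means having the same elements of `A` below
them, which is visibly an equivalence relation. Starting from the least element of `Z`, repeatedly
pass to the least element of `Z` beyond some element of `A` that lies above the current point. The
interlacing condition lets this continue through all finite stages, and by minimality any element of
`Z` skipped along the way is unseparated from the point before it. So these points represent the
first `ω` classes, and the element of `A` crossed at each step lies between consecutive classes.
-/

section LinearOrder

open Set

variable {α : Type*} [LinearOrder α] {A Z : Set α} {z w : α}

/-- `(A, B)` is an interlace in an arbitrary linear order: the sets are disjoint, nonempty, and each
has an element above every element of the other. Nonemptiness is recorded for `B` alone, as that of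
`A` follows from `exists_gt_left`. -/
structure IsInterlace (A B : Set α) : Prop where
  nonempty : B.Nonempty
  disjoint : Disjoint A B
  exists_gt_right : ∀ a ∈ A, ∃ b ∈ B, a < b
  exists_gt_left : ∀ b ∈ B, ∃ a ∈ A, b < a

/-- No element of `A` lies strictly between `z` and `w`. This is `Sim X Y` with `X ∪ Y` replaced by
a single set, in an arbitrary linear order. -/
def Unseparated (A : Set α) (z w : α) : Prop :=
  ∀ a ∈ A, a ∉ uIoo z w

/-- The class of `z` under the relation `Unseparated A` on `Z`. -/
def unseparatedClass (A Z : Set α) (z : α) : Set α :=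
  {w ∈ Z | Unseparated A z w}

/-- The elements of `A` lying strictly between the sets `C` and `D`. -/
def separators (A C D : Set α) : Set α :=
  {a | a ∈ A ∧ (∀ z ∈ C, z < a) ∧ ∀ w ∈ D, a < w}

theorem unseparated_iff_forall_lt_iff_lt (hz : z ∉ A) (hw : w ∉ A) :
    Unseparated A z w ↔ ∀ a ∈ A, (a < z ↔ a < w) := by
  refine forall₂_congr fun a ha => ?_
  have haz : a ≠ z := ne_of_mem_of_not_mem ha hz
  have haw : a ≠ w := ne_of_mem_of_not_mem ha hw
  simp only [uIoo, mem_Ioo, inf_lt_iff, lt_sup_iff]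
  grind

theorem equivalence_unseparated (hAZ : Disjoint A Z) :
    Equivalence fun z w : Z => Unseparated A z w := by
  have iff_lt (z w : Z) : Unseparated A z w ↔ ∀ a ∈ A, (a < z ↔ a < w) :=
    unseparated_iff_forall_lt_iff_lt (hAZ.notMem_of_mem_right z.2) (hAZ.notMem_of_mem_right w.2)
  simp only [iff_lt]
  exact ⟨fun _ _ _ => Iff.rfl, fun h a ha => (h a ha).symm,
    fun h₁ h₂ a ha => (h₁ a ha).trans (h₂ a ha)⟩

theorem mem_unseparatedClass_self (hAZ : Disjoint A Z) (hz : z ∈ Z) :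
    z ∈ unseparatedClass A Z z :=
  ⟨hz, (equivalence_unseparated hAZ).refl ⟨z, hz⟩⟩

theorem unseparatedClass_eq_of_unseparated (hAZ : Disjoint A Z) (hz : z ∈ Z) (hw : w ∈ Z)
    (h : Unseparated A z w) : unseparatedClass A Z w = unseparatedClass A Z z := by
  have hequiv := equivalence_unseparated hAZ
  have hwz : Unseparated A w z := hequiv.symm (x := ⟨z, hz⟩) (y := ⟨w, hw⟩) h
  ext v
  refine and_congr_right fun hv => ⟨fun hwv => ?_, fun hzv => ?_⟩
  · exact hequiv.trans (x := ⟨z, hz⟩) (y := ⟨w, hw⟩) (z := ⟨v, hv⟩) h hwv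
  · exact hequiv.trans (x := ⟨w, hw⟩) (y := ⟨z, hz⟩) (z := ⟨v, hv⟩) hwz hzv

theorem mem_separators_unseparatedClass (hAZ : Disjoint A Z) {a : α} (ha : a ∈ A) (hz : z ∈ Z)
    (hw : w ∈ Z) (hza : z < a) (haw : a < w) :
    a ∈ separators A (unseparatedClass A Z z) (unseparatedClass A Z w) := by
  have lt_iff_lt {u v : α} (hu : u ∈ Z) (hv : v ∈ unseparatedClass A Z u) : a < u ↔ a < v :=
    (unseparated_iff_forall_lt_iff_lt (hAZ.notMem_of_mem_right hu)
      (hAZ.notMem_of_mem_right hv.1)).1 hv.2 a ha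
  refine ⟨ha, fun v hv => ?_, fun v hv => (lt_iff_lt hw hv).1 haw⟩
  have hva : v ≤ a := not_lt.1 fun hav => hza.not_gt ((lt_iff_lt hz hv).2 hav)
  exact hva.lt_of_ne (hAZ.symm.ne_of_mem hv.1 ha)

theorem lt_of_separators_nonempty {C D : Set α} (h : (separators A C D).Nonempty)
    (hz : z ∈ C) (hw : w ∈ D) : z < w :=
  let ⟨_, _, hC, hD⟩ := h
  (hC z hz).trans (hD w hw)

end LinearOrder

section WellOrder

open Set

variable {α : Type*} [ConditionallyCompleteLinearOrderBot α] {A Z : Set α}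

/-- The elements of `Z` that some element of `A` separates from a smaller point `z`. -/
def separatedAbove (A Z : Set α) (z : α) : Set α :=
  {w ∈ Z | ∃ a ∈ A, z < a ∧ a < w}

/-- The least element of the `n`-th class of `Z` under `Unseparated A`, counting from `0`, when `A`
and `Z` interlace. Otherwise the recursion may run out of elements and return the junk value `⊥`. -/
noncomputable def classRep (A Z : Set α) : ℕ → α
  | 0 => sInf Z
  | n + 1 => sInf (separatedAbove A Z (classRep A Z n))

/-- The `n`-th class of `Z` under `Unseparated A`, counting from `0`. -/
noncomputable def nthClass (A Z : Set α) (n : ℕ) : Set α :=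
  unseparatedClass A Z (classRep A Z n)

theorem unseparated_classRep_of_mem_Ico {n : ℕ} {w : α} (hw : w ∈ Z)
    (h : w ∈ Ico (classRep A Z n) (classRep A Z (n + 1))) :
    Unseparated A (classRep A Z n) w := by
  intro a ha hmem
  rw [uIoo_of_le h.1] at hmem
  exact notMem_of_lt_csInf' h.2 ⟨hw, a, ha, hmem⟩

theorem classRep_le_of_forall_ne_nthClass (hAZ : Disjoint A Z)
    (hmem : ∀ n, classRep A Z n ∈ Z) {z : α} (hz : z ∈ Z)
    (hne : ∀ n, unseparatedClass A Z z ≠ nthClass A Z n) (n : ℕ) : classRep A Z n ≤ z := by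
  induction n with
  | zero => exact csInf_le' hz
  | succ n ih =>
    by_contra! hlt
    exact hne n (unseparatedClass_eq_of_unseparated hAZ (hmem n) hz
      (unseparated_classRep_of_mem_Ico hz ⟨ih, hlt⟩))

namespace IsInterlace

theorem separatedAbove_nonempty (h : IsInterlace A Z) {z : α} (hz : z ∈ Z) :
    (separatedAbove A Z z).Nonempty :=
  let ⟨a, ha, hza⟩ := h.exists_gt_left z hz
  let ⟨w, hw, haw⟩ := h.exists_gt_right a ha
  ⟨w, hw, a, ha, hza, haw⟩

variable [WellFoundedLT α]

theorem classRep_mem (h : IsInterlace A Z) (n : ℕ) : classRep A Z n ∈ Z := by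
  induction n with
  | zero => exact csInf_mem h.nonempty
  | succ n ih => exact (csInf_mem (h.separatedAbove_nonempty ih)).1

theorem classRep_mem_nthClass (h : IsInterlace A Z) (n : ℕ) : classRep A Z n ∈ nthClass A Z n :=
  mem_unseparatedClass_self h.disjoint (h.classRep_mem n)

theorem separators_nthClass_nonempty (h : IsInterlace A Z) (n : ℕ) :
    (separators A (nthClass A Z n) (nthClass A Z (n + 1))).Nonempty :=
  let ⟨_, a, ha, hlt, hgt⟩ := csInf_mem (h.separatedAbove_nonempty (h.classRep_mem n))
  ⟨a, mem_separators_unseparatedClass h.disjoint ha (h.classRep_mem n) (h.classRep_mem (n + 1))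
    hlt hgt⟩

theorem lt_classRep_succ (h : IsInterlace A Z) {n : ℕ} {z : α} (hz : z ∈ nthClass A Z n) :
    z < classRep A Z (n + 1) :=
  lt_of_separators_nonempty (h.separators_nthClass_nonempty n) hz (h.classRep_mem_nthClass (n + 1))

theorem strictMono_classRep (h : IsInterlace A Z) : StrictMono (classRep A Z) :=
  strictMono_nat_of_lt_succ fun n => h.lt_classRep_succ (h.classRep_mem_nthClass n)

theorem nthClass_injective (h : IsInterlace A Z) : Function.Injective (nthClass A Z) := by
  refine Function.Injective.of_lt_imp_ne fun m n hmn heq => ?_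
  have hmem : classRep A Z n ∈ nthClass A Z m := heq ▸ h.classRep_mem_nthClass n
  exact (h.lt_classRep_succ hmem).not_ge (h.strictMono_classRep.monotone hmn)

theorem infinite_setOf_unseparatedClass (h : IsInterlace A Z) :
    {C | ∃ z ∈ Z, C = unseparatedClass A Z z}.Infinite :=
  infinite_of_injective_forall_mem h.nthClass_injective fun n => ⟨_, h.classRep_mem n, rfl⟩

theorem lt_of_mem_nthClass_of_forall_ne (h : IsInterlace A Z) {z : α} (hz : z ∈ Z)
    (hne : ∀ n, unseparatedClass A Z z ≠ nthClass A Z n) {n : ℕ} {w : α}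
    (hw : w ∈ nthClass A Z n) : w < z :=
  (h.lt_classRep_succ hw).trans_le
    (classRep_le_of_forall_ne_nthClass h.disjoint h.classRep_mem hz hne (n + 1))

end IsInterlace

theorem interlace_coding_general [WellFoundedLT α] (X Y Z : Set α) (h : IsInterlace (X ∪ Y) Z) :
    ((∀ z ∈ Z, Unseparated (X ∪ Y) z z) ∧
     (∀ z ∈ Z, ∀ z' ∈ Z, Unseparated (X ∪ Y) z z' → Unseparated (X ∪ Y) z' z) ∧
     (∀ z ∈ Z, ∀ z' ∈ Z, ∀ z'' ∈ Z, Unseparated (X ∪ Y) z z' → Unseparated (X ∪ Y) z' z'' →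
       Unseparated (X ∪ Y) z z'')) ∧
    {C | ∃ z ∈ Z, C = unseparatedClass (X ∪ Y) Z z}.Infinite ∧
    ∃ e : ℕ → Set α,
      (∀ n, ∃ z ∈ Z, e n = unseparatedClass (X ∪ Y) Z z) ∧
      (∀ n, ∀ z ∈ e n, ∀ w ∈ e (n + 1), z < w) ∧
      (∀ z ∈ Z, (∀ n, unseparatedClass (X ∪ Y) Z z ≠ e n) → ∀ n, ∀ w ∈ e n, w < z) ∧
      (∀ n, (separators (X ∪ Y) (e n) (e (n + 1))).Nonempty) ∧
      ∃! a : Set ℕ, ∀ n, (n ∈ a ↔ sInf (separators (X ∪ Y) (e n) (e (n + 1))) ∈ X) := by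
  have hequiv := equivalence_unseparated h.disjoint
  have hsep := h.separators_nthClass_nonempty
  refine ⟨⟨fun z hz => hequiv.refl ⟨z, hz⟩,
      fun z hz z' hz' => hequiv.symm (x := ⟨z, hz⟩) (y := ⟨z', hz'⟩),
      fun z hz z' hz' z'' hz'' =>
        hequiv.trans (x := ⟨z, hz⟩) (y := ⟨z', hz'⟩) (z := ⟨z'', hz''⟩)⟩,
    h.infinite_setOf_unseparatedClass, nthClass (X ∪ Y) Z, ?_, ?_, ?_, hsep, ?_⟩
  · exact fun n => ⟨_, h.classRep_mem n, rfl⟩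
  · exact fun n z hz w hw => lt_of_separators_nonempty (hsep n) hz hw
  · exact fun z hz hne n w hw => h.lt_of_mem_nthClass_of_forall_ne hz hne hw
  · exact ⟨{n | _}, fun _ => Iff.rfl, fun _ hb => Set.ext hb⟩

end WellOrder

/-- Let `X, Y, Z` be pairwise disjoint sets of ordinals with `(X ∪ Y, Z)` an
interlace.  Then `∼` is an equivalence relation on `Z` with infinitely many
equivalence classes; listing the first `ω` classes `e 0 < e 1 < ⋯` in
increasing order, between any two consecutive classes `e n` and `e (n+1)`
there is an element of `X ∪ Y`; and consequently `(X, Y, Z)` codes a unique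
set `a ⊆ ω` by: `n ∈ a` iff the least element of `X ∪ Y` strictly between
`e n` and `e (n+1)` belongs to `X`. -/
theorem interlace_coding (X Y Z : Set Ordinal.{0})
    (hXY : Disjoint X Y) (hXZ : Disjoint X Z) (hYZ : Disjoint Y Z)
    (hI : Interlace (X ∪ Y) Z) :
    -- `∼` is an equivalence relation on `Z`
    ((∀ z ∈ Z, Sim X Y z z) ∧
     (∀ z ∈ Z, ∀ z' ∈ Z, Sim X Y z z' → Sim X Y z' z) ∧
     (∀ z ∈ Z, ∀ z' ∈ Z, ∀ z'' ∈ Z, Sim X Y z z' → Sim X Y z' z'' → Sim X Y z z'')) ∧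
    -- with infinitely many equivalence classes
    {C : Set Ordinal.{0} | ∃ z ∈ Z, C = {w ∈ Z | Sim X Y z w}}.Infinite ∧
    -- the first `ω` equivalence classes, listed in increasing order
    ∃ e : ℕ → Set Ordinal.{0},
      (∀ n, ∃ z ∈ Z, e n = {w ∈ Z | Sim X Y z w}) ∧
      (∀ n, ∀ z ∈ e n, ∀ w ∈ e (n + 1), z < w) ∧
      (∀ z ∈ Z, (∀ n, {w ∈ Z | Sim X Y z w} ≠ e n) → ∀ n, ∀ w ∈ e n, w < z) ∧
      -- between consecutive classes there is an element of `X ∪ Y`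
      (∀ n, {α | α ∈ X ∪ Y ∧ (∀ z ∈ e n, z < α) ∧ ∀ w ∈ e (n + 1), α < w}.Nonempty) ∧
      -- hence `(X, Y, Z)` codes a unique subset of `ω`
      ∃! a : Set ℕ, ∀ n, (n ∈ a ↔
        sInf {α | α ∈ X ∪ Y ∧ (∀ z ∈ e n, z < α) ∧ ∀ w ∈ e (n + 1), α < w} ∈ X) := by
  obtain ⟨-, hZ, hdisj, hlt_right, hlt_left⟩ := hI
  exact interlace_coding_general X Y Z ⟨hZ, hdisj, hlt_right, hlt_left⟩
end
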